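/- Let α₁,…,α_K be i.i.d. exponential random variables with mean ᾱ > 0 and let P₁ > 0, c > 0, R > 0. The outage probability p = Pr{∩_{k=1}^K log₂(1 + α_k c P₁/(α_k P₁ + 1)) < R} satisfies: if 2^R - 1 < c, then lim_{P₁→∞} -log p / log P₁ = K; if 2^R - 1 ≥ c, then p = 1 for all P₁. -/

import Mathlib

open MeasureTheory ProbabilityTheory Filter

lemma aux_cond (c R P a : ℝ) (hc : 0 < c) (hP : 0 < P) (ha : 0 ≤ a) :
    Real.logb 2 (1 + a * (c * P) / (a * P + 1)) < R ↔
      a * P * (c - ((2:ℝ) ^ R - 1)) < (2:ℝ) ^ R - 1 := by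
  have h1 : 0 < a * P + 1 := by positivity
  have h2 : 0 < 1 + a * (c * P) / (a * P + 1) := by positivity
  rw [Real.logb_lt_iff_lt_rpow (by norm_num) h2, ← lt_sub_iff_add_lt', div_lt_iff₀ h1]
  constructor <;> intro h <;> nlinarith

lemma aux_nonneg (r : ℝ) : ∀ᵐ a ∂(expMeasure r), 0 ≤ a := by
  rw [ae_iff]
  have : {a : ℝ | ¬ 0 ≤ a} = Set.Iio 0 := by ext; simp
  rw [this, expMeasure, gammaMeasure, withDensity_apply _ measurableSet_Iio,
    setLIntegral_congr_fun (g := fun _ => 0) measurableSet_Iio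
      (fun x hx => gammaPDF_of_neg hx)]
  simp

lemma aux_ne (r t : ℝ) : ∀ᵐ a ∂(expMeasure r), a ≠ t := by
  have h : expMeasure r ≪ volume := withDensity_absolutelyContinuous _ _
  exact h.ae_le (Measure.ae_ne volume t)

lemma aux_lim (b : ℝ) (hb : 0 < b) (K : ℕ) :
    Tendsto (fun P : ℝ => -Real.log ((1 - Real.exp (-(b / P))) ^ K) / Real.log P) atTop
      (nhds (K : ℝ)) := by
  have hd : HasDerivAt (fun x : ℝ => 1 - Real.exp (-(b * x))) b 0 := by
    have := (((hasDerivAt_id (0:ℝ)).const_mul b).neg.exp).const_sub 1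
    simpa using this
  have h1 := hd.tendsto_slope_zero_right.comp tendsto_inv_atTop_nhdsGT_zero
  have h2 := (h1.log hb.ne').div_atTop Real.tendsto_log_atTop
  have h3 : Tendsto (fun P : ℝ => (K : ℝ) * (1 - Real.log (P * (1 - Real.exp (-(b / P)))) / Real.log P))
      atTop (nhds (K * (1 - 0))) := by
    refine Tendsto.const_mul _ (Tendsto.const_sub _ ?_)
    simpa [Function.comp_def, div_eq_mul_inv] using h2
  rw [sub_zero, mul_one] at h3
  refine h3.congr' ?_
  filter_upwards [eventually_gt_atTop 1] with P hP
  have hl : 0 < Real.log P := Real.log_pos hP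
  have hP0 : 0 < P := by linarith
  have hx : 0 < 1 - Real.exp (-(b / P)) := by
    rw [sub_pos, Real.exp_lt_one_iff]
    have : 0 < b / P := by positivity
    linarith
  rw [Real.log_mul hP0.ne' hx.ne', Real.log_pow]
  field_simp
  ring

theorem stmt_5 (abar c R : ℝ) (K : ℕ) (habar : 0 < abar) (hc : 0 < c) (hR : 0 < R) (hK : 0 < K)
    (p : ℝ → ℝ)
    (hp : ∀ P₁ : ℝ, p P₁ = ((Measure.pi fun _ : Fin K => expMeasure (1 / abar))
      {α : Fin K → ℝ | ∀ k, Real.logb 2 (1 + α k * (c * P₁) / (α k * P₁ + 1)) < R}).toReal) :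
    (((2:ℝ) ^ R - 1 < c →
        Tendsto (fun P₁ : ℝ => -Real.log (p P₁) / Real.log P₁) atTop (nhds (K : ℝ))) ∧
      (c ≤ (2:ℝ) ^ R - 1 → ∀ P₁ : ℝ, 0 < P₁ → p P₁ = 1)) := by
  have hr : 0 < 1 / abar := by positivity
  haveI := isProbabilityMeasure_expMeasure hr
  have hd : 0 < (2:ℝ) ^ R - 1 := by
    have := Real.one_lt_rpow (by norm_num : (1:ℝ) < 2) hR
    linarith
  have hp' : ∀ P : ℝ, p P = ((expMeasure (1 / abar))
      {a : ℝ | Real.logb 2 (1 + a * (c * P) / (a * P + 1)) < R}).toReal ^ K := by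
    intro P
    have : {α : Fin K → ℝ | ∀ k, Real.logb 2 (1 + α k * (c * P) / (α k * P + 1)) < R} =
        Set.univ.pi fun _ => {a : ℝ | Real.logb 2 (1 + a * (c * P) / (a * P + 1)) < R} := by
      ext; simp
    rw [hp, this, Measure.pi_pi]
    simp
  constructor
  · intro h
    set d := (2:ℝ) ^ R - 1 with hdd
    have hcd : 0 < c - d := by linarith
    refine (aux_lim (1 / abar * (d / (c - d))) (by positivity) K).congr' ?_
    filter_upwards [eventually_gt_atTop 0] with P hP
    have hS : (expMeasure (1 / abar))
        {a : ℝ | Real.logb 2 (1 + a * (c * P) / (a * P + 1)) < R} =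
        (expMeasure (1 / abar)) (Set.Iic (d / (c - d) / P)) := by
      apply measure_congr
      filter_upwards [aux_nonneg (1 / abar), aux_ne (1 / abar) (d / (c - d) / P)] with a ha hne
      apply propext
      change Real.logb 2 (1 + a * (c * P) / (a * P + 1)) < R ↔ a ≤ d / (c - d) / P
      rw [aux_cond c R P a hc hP ha, ← hdd, hne.le_iff_lt, lt_div_iff₀ hP, lt_div_iff₀ hcd]
    have hcdf := cdf_expMeasure_eq hr (d / (c - d) / P)
    rw [cdf_eq_real, if_pos (by positivity)] at hcdf
    rw [hp', hS]
    change _ = -Real.log ((expMeasure (1 / abar)).real _ ^ K) / _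
    rw [hcdf, mul_div_assoc]
  · intro h P hP
    rw [hp']
    have : (expMeasure (1 / abar))
        {a : ℝ | Real.logb 2 (1 + a * (c * P) / (a * P + 1)) < R} = 1 := by
      rw [← measure_univ (μ := expMeasure (1 / abar))]
      apply measure_congr
      filter_upwards [aux_nonneg (1 / abar)] with a ha
      apply propext
      change Real.logb 2 (1 + a * (c * P) / (a * P + 1)) < R ↔ True
      rw [aux_cond c R P a hc hP ha, iff_true]
      have : 0 ≤ a * P := by positivity
      nlinarith
    rw [this]; simp
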